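/- Let V₁ ~ χ²_J and V₂ ~ χ²_K be independent (J, K positive integers, n = J + K). Then E_{V₂}[(E_{V₁}[√(V₁+V₂) | V₂])²] = (n+J) · B((n+J)/2, (n+1)/2) / B((n+J+1)/2, n/2) · ₃F₂((n+1)/2, J/2, −1/2; (n+J+1)/2, n/2; 1). -/

import Mathlib

open Real MeasureTheory

/-- Pochhammer (rising factorial) symbol on the reals. -/
noncomputable def poch (x : ℝ) (k : ℕ) : ℝ := (ascPochhammer ℝ k).eval x

/-- Density of the chi-squared distribution with `k` degrees of freedom. -/
noncomputable def chiSqPdf (k : ℝ) (u : ℝ) : ℝ :=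
  Real.exp (-u / 2) * u ^ (k / 2 - 1) / (Real.Gamma (k / 2) * 2 ^ (k / 2))

/-!
Write the square of the inner expectation as a product over two independent copies `X`, `Y` of
`V₁`, and put `W = V₂`. With `T = X + W + Y`, `U = (X + W) / T` and `S = X / (X + W)`, the
beta–gamma algebra says that `S`, `U`, `T` are independent with beta, beta and gamma laws, and
`X + W = U T`, `Y + W = (1 - S U) T`. Hence the quantity equals `E[T] · E[√U · √(1 - S U)]`.
Expanding the last square root in its binomial series, whose coefficients are absolutely summable,
and inserting the beta moments gives the hypergeometric series. The same computation works for
gamma laws of any shape and rate and for any exponent `c ≥ 0` in place of `1 / 2`.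
-/

open ProbabilityTheory
open scoped ENNReal

section Pochhammer

theorem poch_zero (x : ℝ) : poch x 0 = 1 := by
  simp [poch]

theorem poch_succ (x : ℝ) (l : ℕ) : poch x (l + 1) = poch x l * (x + l) :=
  ascPochhammer_succ_eval l x

theorem poch_succ_left (x : ℝ) (l : ℕ) : poch x (l + 1) = x * poch (x + 1) l := by
  simp [poch, ascPochhammer_succ_left]

theorem poch_pos {x : ℝ} (hx : 0 < x) (l : ℕ) : 0 < poch x l :=
  ascPochhammer_pos l x hx

theorem Gamma_add_natCast_eq_poch_mul {x : ℝ} (hx : 0 < x) (l : ℕ) :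
    Gamma (x + l) = poch x l * Gamma x := by
  induction l with
  | zero => simp [poch_zero]
  | succ l ih =>
    rw [Nat.cast_succ, ← add_assoc, Gamma_add_one (by positivity), ih, poch_succ]
    ring

theorem multichoose_eq_poch_div_factorial (x : ℝ) (l : ℕ) :
    Ring.multichoose x l = poch x l / l.factorial := by
  rw [eq_div_iff (by positivity), poch, ← Polynomial.ascPochhammer_smeval_eq_eval,
    ← Ring.factorial_nsmul_multichoose_eq_ascPochhammer, nsmul_eq_mul, mul_comm]

theorem hasSum_poch_neg_one_sub_rpow (c : ℝ) {x : ℝ} (hx : |x| < 1) :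
    HasSum (fun l : ℕ ↦ poch (-c) l / l.factorial * x ^ l) ((1 - x) ^ c) := by
  have hball : x ∈ Metric.eball (0 : ℝ) 1 := by
    simpa [Metric.mem_eball, edist_zero_right, ← ofReal_norm] using hx
  have h := (one_div_one_sub_rpow_hasFPowerSeriesOnBall_zero (-c)).hasSum hball
  have hpos : 0 ≤ 1 - x := by linarith [(abs_lt.1 hx).2]
  simpa [FormalMultilinearSeries.ofScalars_apply_eq, ← Ring.multichoose_eq,
    multichoose_eq_poch_div_factorial, rpow_neg hpos, mul_comm] using h

/-- The coefficients `(-c)_l / l!` eventually have constant sign, so that their absolute values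
telescope just as they do themselves. -/
theorem abs_poch_neg_succ_div_factorial {c : ℝ} (hc : 0 ≤ c) {l : ℕ} (hl : c ≤ l + 1) :
    |poch (-c) (l + 1) / (l + 1).factorial| =
      |poch (1 - c) l| / l.factorial - |poch (1 - c) (l + 1)| / (l + 1).factorial := by
  rw [poch_succ_left, poch_succ, neg_add_eq_sub, abs_div, abs_mul, abs_mul, abs_neg,
    abs_of_nonneg hc, abs_of_nonneg (by linarith : 0 ≤ 1 - c + (l : ℝ)), Nat.abs_cast,
    Nat.factorial_succ]
  push_cast
  field_simp
  ring

theorem summable_abs_poch_neg_div_factorial {c : ℝ} (hc : 0 ≤ c) :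
    Summable fun l : ℕ ↦ |poch (-c) l / l.factorial| := by
  set r : ℕ → ℝ := fun l ↦ |poch (1 - c) l| / l.factorial
  set N := ⌈c⌉₊
  have hN : ∀ i : ℕ, c ≤ (i + N : ℕ) + 1 := fun i ↦ by
    push_cast
    linarith [Nat.le_ceil c, i.cast_nonneg (α := ℝ)]
  rw [← summable_nat_add_iff (N + 1)]
  refine summable_of_sum_range_le (c := r N) (fun _ ↦ abs_nonneg _) fun m ↦ ?_
  calc ∑ i ∈ Finset.range m, |poch (-c) (i + (N + 1)) / (i + (N + 1)).factorial|
      = ∑ i ∈ Finset.range m, (r (i + N) - r (i + 1 + N)) :=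
        Finset.sum_congr rfl fun i _ ↦ by
          rw [← add_assoc, abs_poch_neg_succ_div_factorial hc (hN i), add_right_comm]
    _ = r N - r (m + N) := by rw [Finset.sum_range_sub' (fun i ↦ r (i + N)), zero_add]
    _ ≤ r N := sub_le_self _ (by positivity)

theorem hasSum_integral_mul_one_sub_rpow {Ω : Type*} [MeasurableSpace Ω] {μ : Measure Ω}
    {f X : Ω → ℝ} (hf : Integrable f μ) (hXm : AEStronglyMeasurable X μ)
    (hX : ∀ᵐ ω ∂μ, |X ω| < 1) {c : ℝ} (hc : 0 ≤ c) :
    HasSum (fun l : ℕ ↦ poch (-c) l / l.factorial * ∫ ω, f ω * X ω ^ l ∂μ)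
      (∫ ω, f ω * (1 - X ω) ^ c ∂μ) := by
  set d : ℕ → ℝ := fun l ↦ poch (-c) l / l.factorial
  have hpow_le : ∀ l : ℕ, ∀ᵐ ω ∂μ, ‖X ω ^ l‖ ≤ 1 := fun l ↦ by
    filter_upwards [hX] with ω hω
    simpa using pow_le_one₀ (abs_nonneg _) hω.le
  have hint : ∀ l : ℕ, Integrable (fun ω ↦ f ω * X ω ^ l) μ := fun l ↦
    hf.mul_bdd (hXm.pow l) (hpow_le l)
  have hbound : ∀ l : ℕ, ∫ ω, ‖d l * (f ω * X ω ^ l)‖ ∂μ ≤ |d l| * ∫ ω, ‖f ω‖ ∂μ := fun l ↦ by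
    rw [← integral_const_mul]
    refine integral_mono_ae ((hint l).const_mul _).norm (hf.norm.const_mul _) ?_
    filter_upwards [hpow_le l] with ω hω
    rw [norm_mul, norm_mul, Real.norm_eq_abs (d l)]
    gcongr
    exact mul_le_of_le_one_right (norm_nonneg _) hω
  have hsum : Summable fun l : ℕ ↦ ∫ ω, ‖d l * (f ω * X ω ^ l)‖ ∂μ :=
    .of_nonneg_of_le (fun l ↦ integral_nonneg fun ω ↦ norm_nonneg _) hbound
      ((summable_abs_poch_neg_div_factorial hc).mul_right _)
  have htsum : ∀ᵐ ω ∂μ, ∑' l, d l * (f ω * X ω ^ l) = f ω * (1 - X ω) ^ c := by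
    filter_upwards [hX] with ω hω
    simpa only [mul_left_comm] using
      ((hasSum_poch_neg_one_sub_rpow c hω).mul_left (f ω)).tsum_eq
  simpa only [integral_const_mul, integral_congr_ae htsum] using
    hasSum_integral_of_summable_integral_norm (fun l ↦ (hint l).const_mul (d l)) hsum

end Pochhammer

section BetaGamma

theorem lintegral_eq_ofReal_abs_mul_lintegral_comp_mul_right {g : ℝ → ℝ≥0∞} (hg : Measurable g)
    {t : ℝ} (ht : t ≠ 0) : ∫⁻ x, g x = ENNReal.ofReal |t| * ∫⁻ s, g (s * t) := by
  rw [← lintegral_map hg (measurable_mul_const t), ← smul_eq_mul, ← lintegral_smul_measure,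
    smul_map_volume_mul_right ht]

theorem lintegral_lintegral_eq_lintegral_lintegral_proportion {G : ℝ → ℝ → ℝ≥0∞}
    (hG : Measurable (Function.uncurry G)) :
    ∫⁻ x, ∫⁻ y, G x y = ∫⁻ t, ∫⁻ s, ENNReal.ofReal |t| * G (s * t) ((1 - s) * t) := by
  calc ∫⁻ x, ∫⁻ y, G x y = ∫⁻ x, ∫⁻ t, G x (t - x) :=
        lintegral_congr fun x ↦ (lintegral_sub_right_eq_self (G x) x).symm
    _ = ∫⁻ t, ∫⁻ x, G x (t - x) :=
        lintegral_lintegral_swap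
          (hG.comp (measurable_fst.prodMk (measurable_snd.sub measurable_fst))).aemeasurable
    _ = ∫⁻ t, ∫⁻ s, ENNReal.ofReal |t| * G (s * t) ((1 - s) * t) := by
        refine lintegral_congr_ae ?_
        filter_upwards [Measure.ae_ne volume (0 : ℝ)] with t ht
        have hGt : Measurable fun x ↦ G x (t - x) :=
          hG.comp (measurable_id.prodMk (measurable_const.sub measurable_id))
        rw [lintegral_eq_ofReal_abs_mul_lintegral_comp_mul_right hGt ht,
          ← lintegral_const_mul _ (by fun_prop)]
        simp only [one_sub_mul]

@[fun_prop]
theorem measurable_gammaPDF (a r : ℝ) : Measurable (gammaPDF a r) :=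
  (measurable_gammaPDFReal a r).ennreal_ofReal

@[fun_prop]
theorem measurable_betaPDF (a b : ℝ) : Measurable (betaPDF a b) :=
  (measurable_betaPDFReal a b).ennreal_ofReal

instance sFinite_gammaMeasure (a r : ℝ) : SFinite (gammaMeasure a r) :=
  inferInstanceAs (SFinite (volume.withDensity _))

instance sFinite_betaMeasure (a b : ℝ) : SFinite (betaMeasure a b) :=
  inferInstanceAs (SFinite (volume.withDensity _))

theorem abs_mul_gammaPDFReal_mul_gammaPDFReal {a b r s t : ℝ} (ha : 0 < a) (hb : 0 < b)
    (hr : 0 < r) (ht : t ≠ 0) (hs₀ : s ≠ 0) (hs₁ : s ≠ 1) :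
    |t| * (gammaPDFReal a r (s * t) * gammaPDFReal b r ((1 - s) * t)) =
      betaPDFReal a b s * gammaPDFReal (a + b) r t := by
  rcases ht.lt_or_gt with ht | ht
  · have hst : s * t < 0 ∨ (1 - s) * t < 0 := by
      by_contra! h
      linarith
    rw [gammaPDFReal, gammaPDFReal, gammaPDFReal, if_neg ht.not_ge]
    rcases hst with h | h <;> simp [h.not_ge]
  rcases hs₀.lt_or_gt with hs | hs
  · simp [gammaPDFReal, betaPDFReal, hs.not_gt, (mul_neg_of_neg_of_pos hs ht).not_ge]
  rcases hs₁.lt_or_gt with hs' | hs'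
  · have hs'' : 0 < 1 - s := sub_pos.2 hs'
    have hexp : exp (-(r * (s * t))) * exp (-(r * ((1 - s) * t))) = exp (-(r * t)) := by
      rw [← exp_add]
      ring_nf
    have htpow : t ^ (a + b - 1) = t * (t ^ (a - 1) * t ^ (b - 1)) := by
      rw [← rpow_add ht, mul_comm, ← rpow_add_one ht.ne']
      ring_nf
    rw [gammaPDFReal, gammaPDFReal, gammaPDFReal, betaPDFReal, if_pos (by positivity),
      if_pos (by positivity), if_pos ht.le, if_pos ⟨hs, hs'⟩, abs_of_pos ht, ← hexp, htpow,
      mul_rpow hs.le ht.le, mul_rpow hs''.le ht.le, rpow_add hr, beta]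
    field_simp
  · simp [gammaPDFReal, betaPDFReal, hs'.not_gt,
      (mul_neg_of_neg_of_pos (sub_neg.2 hs') ht).not_ge]

theorem ofReal_abs_mul_gammaPDF_mul_gammaPDF {a b r s t : ℝ} (ha : 0 < a) (hb : 0 < b)
    (hr : 0 < r) (ht : t ≠ 0) (hs₀ : s ≠ 0) (hs₁ : s ≠ 1) :
    ENNReal.ofReal |t| * (gammaPDF a r (s * t) * gammaPDF b r ((1 - s) * t)) =
      betaPDF a b s * gammaPDF (a + b) r t := by
  rw [betaPDF, gammaPDF, gammaPDF, gammaPDF,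
    ← ENNReal.ofReal_mul (gammaPDFReal_nonneg ha hr _), ← ENNReal.ofReal_mul (abs_nonneg t),
    abs_mul_gammaPDFReal_mul_gammaPDFReal ha hb hr ht hs₀ hs₁,
    ENNReal.ofReal_mul' (gammaPDFReal_nonneg (add_pos ha hb) hr _)]

theorem measurePreserving_beta_prod_gamma {a b r : ℝ} (ha : 0 < a) (hb : 0 < b) (hr : 0 < r) :
    MeasurePreserving (fun p : ℝ × ℝ ↦ (p.1 * p.2, (1 - p.1) * p.2))
      ((betaMeasure a b).prod (gammaMeasure (a + b) r))
      ((gammaMeasure a r).prod (gammaMeasure b r)) := by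
  have hφ : Measurable fun p : ℝ × ℝ ↦ (p.1 * p.2, (1 - p.1) * p.2) := by fun_prop
  refine ⟨hφ, Measure.ext_of_lintegral _ fun f hf ↦ ?_⟩
  rw [lintegral_map hf hφ, betaMeasure, gammaMeasure, gammaMeasure, gammaMeasure,
    prod_withDensity (by fun_prop) (by fun_prop), prod_withDensity (by fun_prop) (by fun_prop),
    lintegral_withDensity_eq_lintegral_mul _ (by fun_prop) (by fun_prop),
    lintegral_withDensity_eq_lintegral_mul _ (by fun_prop) hf,
    lintegral_prod_symm _ (by fun_prop), lintegral_prod _ (by fun_prop)]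
  simp only [Pi.mul_apply]
  rw [lintegral_lintegral_eq_lintegral_lintegral_proportion
    (G := fun x y ↦ gammaPDF a r x * gammaPDF b r y * f (x, y)) (by fun_prop)]
  refine lintegral_congr_ae ?_
  filter_upwards [Measure.ae_ne volume (0 : ℝ)] with t ht
  refine lintegral_congr_ae ?_
  filter_upwards [Measure.ae_ne volume (0 : ℝ), Measure.ae_ne volume (1 : ℝ)] with s hs₀ hs₁
  rw [← ofReal_abs_mul_gammaPDF_mul_gammaPDF ha hb hr ht hs₀ hs₁, mul_assoc]

end BetaGamma

section Moments

section Density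

variable {Ω : Type*} [MeasurableSpace Ω] {μ : Measure Ω} {p q g : Ω → ℝ} {C : ℝ}

theorem integral_withDensity_ofReal (hp : Measurable p) (hp₀ : ∀ ω, 0 ≤ p ω) :
    ∫ ω, g ω ∂μ.withDensity (fun ω ↦ ENNReal.ofReal (p ω)) = ∫ ω, p ω * g ω ∂μ := by
  rw [integral_withDensity_eq_integral_toReal_smul hp.ennreal_ofReal (by simp)]
  simp only [ENNReal.toReal_ofReal (hp₀ _), smul_eq_mul]

theorem integrable_of_lintegral_ofReal_eq_one (hq : Measurable q) (hq₀ : ∀ ω, 0 ≤ q ω)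
    (hq₁ : ∫⁻ ω, ENNReal.ofReal (q ω) ∂μ = 1) : Integrable q μ := by
  rw [← lintegral_ofReal_ne_top_iff_integrable hq.aestronglyMeasurable (.of_forall hq₀), hq₁]
  exact ENNReal.one_ne_top

theorem integrable_withDensity_ofReal_of_tilt (hp : Measurable p) (hp₀ : ∀ ω, 0 ≤ p ω)
    (hq : Measurable q) (hq₀ : ∀ ω, 0 ≤ q ω) (hq₁ : ∫⁻ ω, ENNReal.ofReal (q ω) ∂μ = 1)
    (htilt : ∀ᵐ ω ∂μ, p ω * g ω = C * q ω) :
    Integrable g (μ.withDensity fun ω ↦ ENNReal.ofReal (p ω)) := by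
  rw [integrable_withDensity_iff_integrable_smul' hp.ennreal_ofReal (by simp)]
  simp only [ENNReal.toReal_ofReal (hp₀ _), smul_eq_mul]
  exact ((integrable_of_lintegral_ofReal_eq_one hq hq₀ hq₁).const_mul C).congr
    (htilt.mono fun _ ↦ Eq.symm)

theorem integral_withDensity_ofReal_of_tilt (hp : Measurable p) (hp₀ : ∀ ω, 0 ≤ p ω)
    (hq : Measurable q) (hq₀ : ∀ ω, 0 ≤ q ω) (hq₁ : ∫⁻ ω, ENNReal.ofReal (q ω) ∂μ = 1)
    (htilt : ∀ᵐ ω ∂μ, p ω * g ω = C * q ω) :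
    ∫ ω, g ω ∂μ.withDensity (fun ω ↦ ENNReal.ofReal (p ω)) = C := by
  rw [integral_withDensity_ofReal hp hp₀, integral_congr_ae htilt, integral_const_mul,
    integral_eq_lintegral_of_nonneg_ae (.of_forall hq₀) hq.aestronglyMeasurable, hq₁,
    ENNReal.toReal_one, mul_one]

end Density

variable {a b r p : ℝ}

theorem gammaPDFReal_mul_rpow (hr : 0 < r) (hap : 0 < a + p) {x : ℝ} (hx : x ≠ 0) :
    gammaPDFReal a r x * x ^ p = Gamma (a + p) / (Gamma a * r ^ p) * gammaPDFReal (a + p) r x := by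
  rcases hx.lt_or_gt with hx | hx
  · simp [gammaPDFReal, hx.not_ge]
  · rw [gammaPDFReal, gammaPDFReal, if_pos hx.le, if_pos hx.le, add_sub_right_comm, rpow_add hx,
      rpow_add hr]
    field_simp

theorem integrable_rpow_gammaMeasure (ha : 0 < a) (hr : 0 < r) (hap : 0 < a + p) :
    Integrable (fun x ↦ x ^ p) (gammaMeasure a r) :=
  integrable_withDensity_ofReal_of_tilt (measurable_gammaPDFReal a r) (gammaPDFReal_nonneg ha hr)
    (measurable_gammaPDFReal (a + p) r) (gammaPDFReal_nonneg hap hr)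
    (lintegral_gammaPDF_eq_one hap hr)
    ((Measure.ae_ne volume 0).mono fun _ ↦ gammaPDFReal_mul_rpow hr hap)

theorem integral_rpow_gammaMeasure (ha : 0 < a) (hr : 0 < r) (hap : 0 < a + p) :
    ∫ x, x ^ p ∂gammaMeasure a r = Gamma (a + p) / (Gamma a * r ^ p) :=
  integral_withDensity_ofReal_of_tilt (measurable_gammaPDFReal a r) (gammaPDFReal_nonneg ha hr)
    (measurable_gammaPDFReal (a + p) r) (gammaPDFReal_nonneg hap hr)
    (lintegral_gammaPDF_eq_one hap hr)
    ((Measure.ae_ne volume 0).mono fun _ ↦ gammaPDFReal_mul_rpow hr hap)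

theorem betaPDFReal_nonneg (ha : 0 < a) (hb : 0 < b) (x : ℝ) : 0 ≤ betaPDFReal a b x := by
  by_cases hx : 0 < x ∧ x < 1
  · exact (betaPDFReal_pos hx.1 hx.2 ha hb).le
  · rw [betaPDFReal, if_neg hx]

theorem betaPDFReal_mul_rpow (hb : 0 < b) (hap : 0 < a + p) (x : ℝ) :
    betaPDFReal a b x * x ^ p = beta (a + p) b / beta a b * betaPDFReal (a + p) b x := by
  by_cases hx : 0 < x ∧ x < 1
  · have hbeta := (beta_pos hap hb).ne'
    rw [betaPDFReal, betaPDFReal, if_pos hx, if_pos hx, add_sub_right_comm, rpow_add hx.1]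
    field_simp
  · rw [betaPDFReal, betaPDFReal, if_neg hx, if_neg hx, zero_mul, mul_zero]

theorem integral_rpow_betaMeasure (ha : 0 < a) (hb : 0 < b) (hap : 0 < a + p) :
    ∫ x, x ^ p ∂betaMeasure a b = beta (a + p) b / beta a b :=
  integral_withDensity_ofReal_of_tilt (measurable_betaPDFReal a b) (betaPDFReal_nonneg ha hb)
    (measurable_betaPDFReal (a + p) b) (betaPDFReal_nonneg hap hb)
    (lintegral_betaPDF_eq_one hap hb) (.of_forall (betaPDFReal_mul_rpow hb hap))

theorem beta_add_natCast_div_beta (ha : 0 < a) (hb : 0 < b) (l : ℕ) :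
    beta (a + l) b / beta a b = poch a l / poch (a + b) l := by
  have hΓ := (Gamma_pos_of_pos (add_pos ha hb)).ne'
  have hpoch := (poch_pos (add_pos ha hb) l).ne'
  have hΓa := (Gamma_pos_of_pos ha).ne'
  have hΓb := (Gamma_pos_of_pos hb).ne'
  rw [beta, beta, add_right_comm,
    Gamma_add_natCast_eq_poch_mul ha, Gamma_add_natCast_eq_poch_mul (add_pos ha hb)]
  field_simp

theorem ae_pos_gammaMeasure (a r : ℝ) : ∀ᵐ x ∂gammaMeasure a r, 0 < x := by
  rw [gammaMeasure, ae_withDensity_iff (by fun_prop)]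
  filter_upwards [Measure.ae_ne volume 0] with x hx₀ hx
  exact hx₀.symm.lt_of_le (le_of_not_gt fun h ↦ hx (gammaPDF_of_neg h))

theorem ae_mem_Ioo_betaMeasure (a b : ℝ) : ∀ᵐ x ∂betaMeasure a b, x ∈ Set.Ioo 0 1 := by
  rw [betaMeasure, ae_withDensity_iff (by fun_prop)]
  exact .of_forall fun x hx ↦ ⟨lt_of_not_ge fun h ↦ hx (betaPDF_eq_zero_of_nonpos h),
    lt_of_not_ge fun h ↦ hx (betaPDF_eq_zero_of_one_le h)⟩

end Moments

section NestedMoment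

variable {a b a' b' r c : ℝ}

theorem integral_sq_integral_eq_integral_prod_prod {α β : Type*} [MeasurableSpace α]
    [MeasurableSpace β] {μ : Measure α} {ν : Measure β} [SFinite μ] [SFinite ν] {f : α → β → ℝ}
    (hf : Integrable (fun z : (α × β) × α ↦ f z.1.1 z.1.2 * f z.2 z.1.2) ((μ.prod ν).prod μ)) :
    ∫ w, (∫ x, f x w ∂μ) ^ 2 ∂ν =
      ∫ z : (α × β) × α, f z.1.1 z.1.2 * f z.2 z.1.2 ∂(μ.prod ν).prod μ := by
  have hf' := hf.integral_prod_left
  simp only [integral_const_mul] at hf'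
  rw [integral_prod _ hf]
  simp only [integral_const_mul]
  rw [integral_prod_symm _ hf']
  simp only [integral_mul_const, sq]

/-- Split `T = q.2` in the ratio `U : 1 - U` with `U = q.1.2`, then `U T` in the ratio `S : 1 - S`
with `S = q.1.1`. -/
theorem measurePreserving_beta_prod_beta_prod_gamma {d : ℝ} (ha : 0 < a) (hb : 0 < b) (hd : 0 < d)
    (hr : 0 < r) :
    MeasurePreserving
      (fun q : (ℝ × ℝ) × ℝ ↦
        ((q.1.1 * (q.1.2 * q.2), (1 - q.1.1) * (q.1.2 * q.2)), (1 - q.1.2) * q.2))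
      (((betaMeasure a b).prod (betaMeasure (a + b) d)).prod (gammaMeasure (a + b + d) r))
      (((gammaMeasure a r).prod (gammaMeasure b r)).prod (gammaMeasure d r)) := by
  have hsplitT := (MeasurePreserving.id (betaMeasure a b)).prod
    (measurePreserving_beta_prod_gamma (add_pos ha hb) hd hr)
  have hsplitTU := (measurePreserving_beta_prod_gamma ha hb hr).prod
    (MeasurePreserving.id (gammaMeasure d r))
  exact hsplitTU.comp <| (measurePreserving_prodAssoc _ _ _).symm.comp <|
    hsplitT.comp (measurePreserving_prodAssoc _ _ _)

theorem ae_mem_Ioo_beta_prod_beta (a b a' b' : ℝ) :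
    ∀ᵐ q ∂(betaMeasure a b).prod (betaMeasure a' b'), q.1 ∈ Set.Ioo 0 1 ∧ q.2 ∈ Set.Ioo 0 1 :=
  (Measure.quasiMeasurePreserving_fst.ae (ae_mem_Ioo_betaMeasure a b)).and
    (Measure.quasiMeasurePreserving_snd.ae (ae_mem_Ioo_betaMeasure a' b'))

theorem integrable_rpow_snd_beta_prod_beta (ha : 0 < a) (hb : 0 < b) (ha' : 0 < a')
    (hb' : 0 < b') (hc : 0 ≤ c) :
    Integrable (fun q : ℝ × ℝ ↦ q.2 ^ c) ((betaMeasure a b).prod (betaMeasure a' b')) := by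
  have := isProbabilityMeasureBeta ha hb
  have := isProbabilityMeasureBeta ha' hb'
  refine .of_bound (by fun_prop) 1 ?_
  filter_upwards [ae_mem_Ioo_beta_prod_beta a b a' b'] with q ⟨_, hu⟩
  rw [norm_of_nonneg (rpow_nonneg hu.1.le c)]
  exact rpow_le_one hu.1.le hu.2.le hc

theorem integrable_rpow_mul_one_sub_mul_rpow_beta_prod_beta (ha : 0 < a) (hb : 0 < b)
    (ha' : 0 < a') (hb' : 0 < b') (hc : 0 ≤ c) :
    Integrable (fun q : ℝ × ℝ ↦ q.2 ^ c * (1 - q.1 * q.2) ^ c)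
      ((betaMeasure a b).prod (betaMeasure a' b')) := by
  refine (integrable_rpow_snd_beta_prod_beta ha hb ha' hb' hc).mul_bdd (c := 1) (by fun_prop) ?_
  filter_upwards [ae_mem_Ioo_beta_prod_beta a b a' b'] with q ⟨hs, hu⟩
  have hsu : 0 ≤ 1 - q.1 * q.2 := sub_nonneg.2 (mul_le_one₀ hs.2.le hu.1.le hu.2.le)
  rw [norm_of_nonneg (rpow_nonneg hsu c)]
  exact rpow_le_one hsu (sub_le_self _ (mul_nonneg hs.1.le hu.1.le)) hc

theorem integral_rpow_mul_mul_pow_beta_prod_beta (ha : 0 < a) (hb : 0 < b) (ha' : 0 < a')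
    (hb' : 0 < b') (hac : 0 < a' + c) (l : ℕ) :
    ∫ q : ℝ × ℝ, q.2 ^ c * (q.1 * q.2) ^ l ∂(betaMeasure a b).prod (betaMeasure a' b') =
      beta (a' + c) b' / beta a' b' *
        (poch a l * poch (a' + c) l / (poch (a + b) l * poch (a' + c + b') l)) := by
  have hS : ∫ s, s ^ l ∂betaMeasure a b = poch a l / poch (a + b) l := by
    rw [← beta_add_natCast_div_beta ha hb, ← integral_rpow_betaMeasure ha hb (by positivity)]
    simp only [rpow_natCast]
  have hU : ∫ u, u ^ (c + l) ∂betaMeasure a' b' =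
      beta (a' + c) b' / beta a' b' * (poch (a' + c) l / poch (a' + c + b') l) := by
    rw [integral_rpow_betaMeasure ha' hb' (by rw [← add_assoc]; positivity),
      ← beta_add_natCast_div_beta hac hb', ← add_assoc, mul_comm,
      div_mul_div_cancel₀ (beta_pos hac hb').ne']
  calc ∫ q : ℝ × ℝ, q.2 ^ c * (q.1 * q.2) ^ l ∂(betaMeasure a b).prod (betaMeasure a' b')
      = ∫ q : ℝ × ℝ, q.1 ^ l * q.2 ^ (c + l) ∂(betaMeasure a b).prod (betaMeasure a' b') := by
        refine integral_congr_ae ?_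
        filter_upwards [ae_mem_Ioo_beta_prod_beta a b a' b'] with q ⟨_, hu⟩
        rw [rpow_add hu.1, rpow_natCast, mul_pow]
        ring
    _ = _ := by
        rw [integral_prod_mul (fun s ↦ s ^ l) (fun u ↦ u ^ (c + l)), hS, hU]
        ring

theorem hasSum_integral_rpow_mul_one_sub_mul_rpow_beta_prod_beta (ha : 0 < a) (hb : 0 < b)
    (ha' : 0 < a') (hb' : 0 < b') (hc : 0 ≤ c) :
    HasSum (fun l : ℕ ↦ poch (-c) l / l.factorial * (beta (a' + c) b' / beta a' b' *
        (poch a l * poch (a' + c) l / (poch (a + b) l * poch (a' + c + b') l))))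
      (∫ q : ℝ × ℝ, q.2 ^ c * (1 - q.1 * q.2) ^ c
        ∂(betaMeasure a b).prod (betaMeasure a' b')) := by
  have hsu : ∀ᵐ q ∂(betaMeasure a b).prod (betaMeasure a' b'), |q.1 * q.2| < 1 := by
    filter_upwards [ae_mem_Ioo_beta_prod_beta a b a' b'] with q ⟨hs, hu⟩
    rw [abs_of_pos (mul_pos hs.1 hu.1)]
    exact mul_lt_one_of_nonneg_of_lt_one_left hs.1.le hs.2 hu.2.le
  simpa only [integral_rpow_mul_mul_pow_beta_prod_beta ha hb ha' hb'
    (add_pos_of_pos_of_nonneg ha' hc)] using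
    hasSum_integral_mul_one_sub_rpow (integrable_rpow_snd_beta_prod_beta ha hb ha' hb' hc)
      (by fun_prop) hsu hc

theorem rpow_add_mul_rpow_add_of_proportions {s u t : ℝ} (hu : 0 ≤ u) (hsu : s * u ≤ 1)
    (ht : 0 < t) (c : ℝ) :
    (s * (u * t) + (1 - s) * (u * t)) ^ c * ((1 - u) * t + (1 - s) * (u * t)) ^ c =
      u ^ c * (1 - s * u) ^ c * t ^ (2 * c) := by
  have hxw : s * (u * t) + (1 - s) * (u * t) = u * t := by ring
  have hyw : (1 - u) * t + (1 - s) * (u * t) = (1 - s * u) * t := by ring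
  rw [hxw, hyw, mul_rpow hu ht.le, mul_rpow (sub_nonneg.2 hsu) ht.le, two_mul, rpow_add ht]
  ring

theorem integral_sq_integral_add_rpow_gammaMeasure_eq_mul (ha : 0 < a) (hb : 0 < b) (hr : 0 < r)
    (hc : 0 ≤ c) :
    ∫ w, (∫ x, (x + w) ^ c ∂gammaMeasure a r) ^ 2 ∂gammaMeasure b r =
      (∫ q : ℝ × ℝ, q.2 ^ c * (1 - q.1 * q.2) ^ c
        ∂(betaMeasure a b).prod (betaMeasure (a + b) a)) *
      ∫ t, t ^ (2 * c) ∂gammaMeasure (a + b + a) r := by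
  have hab := add_pos ha hb
  have haba := add_pos hab ha
  have hsplit := measurePreserving_beta_prod_beta_prod_gamma ha hb ha hr
  set F : (ℝ × ℝ) × ℝ → ℝ := fun z ↦ (z.1.1 + z.1.2) ^ c * (z.2 + z.1.2) ^ c
  set G : ℝ × ℝ → ℝ := fun q ↦ q.2 ^ c * (1 - q.1 * q.2) ^ c
  have hFm : StronglyMeasurable F := Measurable.stronglyMeasurable (by fun_prop)
  have hFG : ∀ᵐ q ∂((betaMeasure a b).prod (betaMeasure (a + b) a)).prod
      (gammaMeasure (a + b + a) r),
      F ((q.1.1 * (q.1.2 * q.2), (1 - q.1.1) * (q.1.2 * q.2)), (1 - q.1.2) * q.2) =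
        G q.1 * q.2 ^ (2 * c) := by
    filter_upwards [Measure.quasiMeasurePreserving_fst.ae
      (ae_mem_Ioo_beta_prod_beta a b (a + b) a),
      Measure.quasiMeasurePreserving_snd.ae (ae_pos_gammaMeasure (a + b + a) r)]
      with q ⟨hs, hu⟩ ht
    exact rpow_add_mul_rpow_add_of_proportions hu.1.le (mul_le_one₀ hs.2.le hu.1.le hu.2.le) ht c
  have hG : Integrable (fun q : (ℝ × ℝ) × ℝ ↦ G q.1 * q.2 ^ (2 * c))
      (((betaMeasure a b).prod (betaMeasure (a + b) a)).prod (gammaMeasure (a + b + a) r)) :=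
    (integrable_rpow_mul_one_sub_mul_rpow_beta_prod_beta ha hb hab ha hc).mul_prod
      (integrable_rpow_gammaMeasure haba hr (by positivity))
  have hF := (hsplit.integrable_comp hFm.aestronglyMeasurable).1
    (hG.congr (hFG.mono fun _ ↦ Eq.symm))
  rw [integral_sq_integral_eq_integral_prod_prod hF, ← hsplit.map_eq,
    integral_map hsplit.measurable.aemeasurable hFm.aestronglyMeasurable, integral_congr_ae hFG]
  exact integral_prod_mul G fun t : ℝ ↦ t ^ (2 * c)

theorem integral_sq_integral_add_rpow_gammaMeasure (ha : 0 < a) (hb : 0 < b) (hr : 0 < r)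
    (hc : 0 ≤ c) :
    ∫ w, (∫ x, (x + w) ^ c ∂gammaMeasure a r) ^ 2 ∂gammaMeasure b r =
      Gamma (a + b + a + 2 * c) / (Gamma (a + b + a) * r ^ (2 * c)) *
        (beta (a + b + c) a / beta (a + b) a) *
      ∑' l : ℕ, poch (a + b + c) l * poch a l * poch (-c) l /
        (poch (a + b + c + a) l * poch (a + b) l * l.factorial) := by
  have hab := add_pos ha hb
  have haba := add_pos hab ha
  rw [integral_sq_integral_add_rpow_gammaMeasure_eq_mul ha hb hr hc,
    integral_rpow_gammaMeasure haba hr (by positivity),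
    ← (hasSum_integral_rpow_mul_one_sub_mul_rpow_beta_prod_beta ha hb hab ha hc).tsum_eq,
    mul_comm, mul_assoc, ← tsum_mul_left (a := beta (a + b + c) a / beta (a + b) a)]
  congr! 3 with l
  ring

end NestedMoment

section ChiSquared

theorem gammaPDFReal_half_eq_chiSqPdf (k : ℝ) {u : ℝ} (hu : 0 ≤ u) :
    gammaPDFReal (k / 2) (1 / 2) u = chiSqPdf k u := by
  rw [gammaPDFReal, if_pos hu, chiSqPdf, one_div, inv_rpow two_pos.le, neg_div,
    ← inv_mul_eq_div 2 u]
  field_simp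

theorem setIntegral_mul_chiSqPdf {k : ℝ} (hk : 0 < k) (f : ℝ → ℝ) :
    ∫ u in Set.Ioi (0 : ℝ), f u * chiSqPdf k u = ∫ u, f u ∂gammaMeasure (k / 2) (1 / 2) := by
  have hpdf : ∀ᵐ u, u ∉ Set.Ioi (0 : ℝ) → gammaPDFReal (k / 2) (1 / 2) u * f u = 0 := by
    filter_upwards [Measure.ae_ne volume 0] with u hu₀ hu
    rw [gammaPDFReal, if_neg fun h ↦ hu (hu₀.symm.lt_of_le h), zero_mul]
  calc ∫ u in Set.Ioi (0 : ℝ), f u * chiSqPdf k u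
      = ∫ u in Set.Ioi (0 : ℝ), gammaPDFReal (k / 2) (1 / 2) u * f u :=
        setIntegral_congr_fun measurableSet_Ioi fun u hu ↦ by
          rw [gammaPDFReal_half_eq_chiSqPdf k (le_of_lt hu), mul_comm]
    _ = ∫ u, gammaPDFReal (k / 2) (1 / 2) u * f u :=
        setIntegral_eq_integral_of_ae_compl_eq_zero hpdf
    _ = ∫ u, f u ∂gammaMeasure (k / 2) (1 / 2) :=
        (integral_withDensity_ofReal (measurable_gammaPDFReal _ _)
          (gammaPDFReal_nonneg (half_pos hk) one_half_pos)).symm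

end ChiSquared

theorem chi_sq_nested_sqrt_moment_general {j k n : ℝ} (hj : 0 < j) (hk : 0 < k)
    (hn : n = j + k) :
    (∫ v₂ in Set.Ioi (0:ℝ),
        (∫ v₁ in Set.Ioi (0:ℝ), √(v₁ + v₂) * chiSqPdf j v₁) ^ 2 * chiSqPdf k v₂) =
      (n + j) *
        ((Gamma ((n + j) / 2) * Gamma ((n + 1) / 2) / Gamma ((n + j) / 2 + (n + 1) / 2)) /
         (Gamma ((n + j + 1) / 2) * Gamma (n / 2) / Gamma ((n + j + 1) / 2 + n / 2))) *
      ∑' l : ℕ, poch ((n + 1) / 2) l * poch (j / 2) l * poch (-(1 / 2)) l /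
          (poch ((n + j + 1) / 2) l * poch (n / 2) l * l.factorial) := by
  have hn₀ : 0 < n := by linarith
  have hab : j / 2 + k / 2 = n / 2 := by rw [hn, add_div]
  have haba : n / 2 + j / 2 = (n + j) / 2 := by ring
  have habc : n / 2 + 1 / 2 = (n + 1) / 2 := by ring
  have habca : (n + 1) / 2 + j / 2 = (n + j + 1) / 2 := by ring
  have hsum : (n + j) / 2 + (n + 1) / 2 = (n + j + 1) / 2 + n / 2 := by ring
  have hΓ : ∀ {x : ℝ}, 0 < x → Gamma x ≠ 0 := fun hx ↦ (Gamma_pos_of_pos hx).ne'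
  simp only [setIntegral_mul_chiSqPdf hj, setIntegral_mul_chiSqPdf hk, sqrt_eq_rpow]
  rw [integral_sq_integral_add_rpow_gammaMeasure (half_pos hj) (half_pos hk) one_half_pos
    one_half_pos.le, hab, haba, habc, habca, hsum]
  congr 1
  rw [beta, beta, habca, haba, mul_one_div_cancel two_ne_zero,
    rpow_one, Gamma_add_one (by positivity)]
  have := hΓ (x := j / 2) (by positivity)
  have := hΓ (x := n / 2) (by positivity)
  have := hΓ (x := (n + j) / 2) (by positivity)
  have := hΓ (x := (n + j + 1) / 2) (by positivity)
  have := hΓ (x := (n + j + 1) / 2 + n / 2) (by positivity)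
  field_simp

theorem chi_sq_nested_sqrt_moment (J K : ℕ) (hJ : 0 < J) (hK : 0 < K)
    (n : ℕ) (hn : n = J + K) :
    (∫ v₂ in Set.Ioi (0:ℝ),
        (∫ v₁ in Set.Ioi (0:ℝ), Real.sqrt (v₁ + v₂) * chiSqPdf (J : ℝ) v₁) ^ 2 *
          chiSqPdf (K : ℝ) v₂) =
      ((n : ℝ) + J) *
        ((Real.Gamma (((n : ℝ) + J) / 2) * Real.Gamma (((n : ℝ) + 1) / 2) /
            Real.Gamma (((n : ℝ) + J) / 2 + ((n : ℝ) + 1) / 2)) /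
         (Real.Gamma (((n : ℝ) + (J : ℝ) + 1) / 2) * Real.Gamma ((n : ℝ) / 2) /
            Real.Gamma (((n : ℝ) + (J : ℝ) + 1) / 2 + (n : ℝ) / 2))) *
      ∑' l : ℕ,
        poch (((n : ℝ) + 1) / 2) l * poch ((J : ℝ) / 2) l * poch (-(1 / 2)) l /
          (poch (((n : ℝ) + (J : ℝ) + 1) / 2) l * poch ((n : ℝ) / 2) l * l.factorial) :=
  chi_sq_nested_sqrt_moment_general (mod_cast hJ) (mod_cast hK) (mod_cast hn)
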